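/- Let G be a nontrivial connected graph of order n with girth g ≥ 6 and minimum degree δ ≥ 2 such that γ_{tR2}(G) = n + 2 − (Δ + δ). Then for every vertex u of maximum degree Δ, every neighbor v of u satisfies deg(v) = δ. -/

import Mathlib

/-- `f` is a total Roman {2}-dominating function on `G`. -/
def IsTR2DF {V : Type*} (G : SimpleGraph V) (f : V → ℕ) : Prop :=
  (∀ v, f v ≤ 2) ∧
  (∀ v, f v = 0 →
    (∃ u, G.Adj u v ∧ f u = 2) ∨
    (∃ x y, x ≠ y ∧ G.Adj x v ∧ G.Adj y v ∧ f x = 1 ∧ f y = 1)) ∧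
  (∀ v, 0 < f v → ∃ u, G.Adj u v ∧ 0 < f u)

/-- The total Roman {2}-domination number of `G`. -/
noncomputable def tR2 {V : Type*} [Fintype V] (G : SimpleGraph V) : ℕ :=
  sInf {w | ∃ f : V → ℕ, IsTR2DF G f ∧ ∑ v, f v = w}

/-!
For an edge `uv`, assign `0` to every vertex other than `u` and `v` that is adjacent to `u` or to
`v`, and `1` to everything else. Since the girth is at least `6`, the vertices with value `0` are
pairwise non-adjacent and any other vertex outside `{u, v}` has at most one of them as a neighbour;
as all degrees are at least `2`, this is a total Roman {2}-dominating function. Its weight gives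
`γ_{tR2}(G) ≤ n + 2 - (deg u + deg v)`, so equality with `deg u = Δ` forces `deg v ≤ δ`.
-/

section Girth

open SimpleGraph

variable {V : Type*} {G : SimpleGraph V}

theorem isAcyclic_of_encard_edgeSet_lt_egirth (h : G.edgeSet.encard < G.egirth) :
    G.IsAcyclic := by
  classical
  intro v c hc
  have length_le : (c.length : ℕ∞) ≤ G.edgeSet.encard := calc
    (c.length : ℕ∞) = c.edges.toFinset.card := by
      rw [List.toFinset_card_of_nodup hc.edges_nodup, c.length_edges]
    _ = (c.edges.toFinset : Set (Sym2 V)).encard := (Set.encard_coe_eq_coe_finsetCard _).symm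
    _ ≤ G.edgeSet.encard :=
      Set.encard_le_encard fun e he => c.edges_subset_edgeSet (List.mem_toFinset.mp he)
  exact (h.trans_le (egirth_le_length hc)).not_ge length_le

theorem egirth_le_length_of_odd {u : V} (w : G.Walk u u) (hw : Odd w.length) :
    G.egirth ≤ w.length := by
  classical
  by_contra! hlt
  -- The edges of `w` are too few to contain a cycle of `G`, so they form a bipartite graph.
  let H := w.toSubgraph.spanningCoe
  have edgeSet_eq : H.edgeSet = w.edges.toFinset := by
    ext e
    simp [H]
  have encard_le : H.edgeSet.encard ≤ w.length := by
    rw [edgeSet_eq, Set.encard_coe_eq_coe_finsetCard, ← w.length_edges]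
    exact_mod_cast w.edges.toFinset_card_le
  have acyclic : H.IsAcyclic := isAcyclic_of_encard_edgeSet_lt_egirth <|
    (encard_le.trans_lt hlt).trans_le (egirth_anti w.toSubgraph.spanningCoe_le)
  have edges_mem : ∀ e ∈ w.edges, e ∈ H.edgeSet := by simp [edgeSet_eq]
  have even : Even (w.transfer H edges_mem).length :=
    two_colorable_iff_forall_loop_even.mp acyclic.isBipartite u _
  rw [Walk.length_transfer] at even
  exact Nat.not_even_iff_odd.mpr hw even

theorem disjoint_neighborSet_of_adj (hG : 4 ≤ G.egirth) {a b : V} (hab : G.Adj a b) :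
    Disjoint (G.neighborSet a) (G.neighborSet b) := by
  rw [Set.disjoint_left]
  intro x (hax : G.Adj a x) (hbx : G.Adj b x)
  have := hG.trans <|
    egirth_le_length_of_odd (.cons hab (.cons hbx (.cons hax.symm .nil))) ⟨1, rfl⟩
  norm_num at this

theorem subsingleton_commonNeighbors (hG : 5 ≤ G.egirth) {a b : V} (hab : a ≠ b) :
    (G.commonNeighbors a b).Subsingleton := by
  intro x hx y hy
  rw [mem_commonNeighbors] at hx hy
  by_contra hxy
  let c : G.Walk a a := .cons hx.1 (.cons hx.2.symm (.cons hy.2 (.cons hy.1.symm .nil)))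
  have hc : c.IsCycle := by
    rw [Walk.cons_isCycle_iff]
    simp [Walk.isPath_def, hab, hab.symm, hxy, hx.1.ne', hx.2.ne', hy.1.ne', hy.2.ne]
  have := hG.trans (egirth_le_length hc)
  norm_num [c] at this

end Girth

section EdgeNeighborhood

open SimpleGraph

variable {V : Type*} {G : SimpleGraph V} {u v : V}

/-- The open neighborhood of the pair `{u, v}`: the vertices other than `u` and `v` that are
adjacent to `u` or to `v`. It is used when `u` and `v` are the ends of an edge. -/
def edgeNeighborSet (G : SimpleGraph V) (u v : V) : Set V :=
  (G.neighborSet u ∪ G.neighborSet v) \ {u, v}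

theorem mem_edgeNeighborSet {x : V} :
    x ∈ edgeNeighborSet G u v ↔ (G.Adj u x ∨ G.Adj v x) ∧ x ≠ u ∧ x ≠ v := by
  simp [edgeNeighborSet]

theorem ncard_edgeNeighborSet_add_two (hG : 4 ≤ G.egirth) (huv : G.Adj u v)
    [Fintype (G.neighborSet u)] [Fintype (G.neighborSet v)] :
    (edgeNeighborSet G u v).ncard + 2 = G.degree u + G.degree v := by
  have ends_subset : {u, v} ⊆ G.neighborSet u ∪ G.neighborSet v := by
    simp [Set.insert_subset_iff, huv, huv.symm]
  rw [edgeNeighborSet, ← Set.ncard_pair huv.ne, Set.ncard_sdiff_add_ncard_of_subset ends_subset,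
    Set.ncard_union_eq (disjoint_neighborSet_of_adj hG huv)]
  simp only [← coe_neighborFinset, Set.ncard_coe_finset, card_neighborFinset_eq_degree]

theorem isIndepSet_edgeNeighborSet (hG : 5 ≤ G.egirth) (huv : G.Adj u v) :
    G.IsIndepSet (edgeNeighborSet G u v) := by
  have no_triangle {a b c : V} (hab : G.Adj a b) (hac : G.Adj a c) (hbc : G.Adj b c) : False :=
    Set.disjoint_left.mp (disjoint_neighborSet_of_adj (le_trans (by norm_num) hG) hab) hac hbc
  intro x hx y hy _ hxy
  obtain ⟨hux | hvx, hxu, hxv⟩ := mem_edgeNeighborSet.mp hx <;>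
    obtain ⟨huy | hvy, hyu, hyv⟩ := mem_edgeNeighborSet.mp hy
  · exact no_triangle hux huy hxy
  · exact hxv (subsingleton_commonNeighbors hG hyu.symm ⟨hux, hxy.symm⟩ ⟨huv, hvy.symm⟩)
  · exact hxu (subsingleton_commonNeighbors hG hyv.symm ⟨hvx, hxy.symm⟩ ⟨huv.symm, huy.symm⟩)
  · exact no_triangle hvx hvy hxy

theorem subsingleton_neighborSet_inter_edgeNeighborSet (hG : 6 ≤ G.egirth) (huv : G.Adj u v)
    {x : V} (hxu : x ≠ u) (hxv : x ≠ v) :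
    (G.neighborSet x ∩ edgeNeighborSet G u v).Subsingleton := by
  have hG' : 5 ≤ G.egirth := le_trans (by norm_num) hG
  have no_pentagon {s t : V} (hxs : G.Adj x s) (hus : G.Adj u s) (hvt : G.Adj v t)
      (hxt : G.Adj x t) : False := by
    have := hG.trans <| egirth_le_length_of_odd
      (.cons hxs (.cons hus.symm (.cons huv (.cons hvt (.cons hxt.symm .nil))))) ⟨2, rfl⟩
    norm_num at this
  rintro s ⟨hxs, hs⟩ t ⟨hxt, ht⟩
  obtain ⟨hus | hvs, -⟩ := mem_edgeNeighborSet.mp hs <;>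
    obtain ⟨hut | hvt, -⟩ := mem_edgeNeighborSet.mp ht
  · exact subsingleton_commonNeighbors hG' hxu ⟨hxs, hus⟩ ⟨hxt, hut⟩
  · exact (no_pentagon hxs hus hvt hxt).elim
  · exact (no_pentagon hxt hut hvs hxs).elim
  · exact subsingleton_commonNeighbors hG' hxv ⟨hxs, hvs⟩ ⟨hxt, hvt⟩

theorem nontrivial_neighborSet_diff_edgeNeighborSet (hG : 5 ≤ G.egirth) (huv : G.Adj u v)
    {x : V} (hx : x ∈ edgeNeighborSet G u v) (hnt : (G.neighborSet x).Nontrivial) :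
    (G.neighborSet x \ edgeNeighborSet G u v).Nontrivial :=
  hnt.mono fun _ hy => ⟨hy, fun hy' =>
    isIndepSet_edgeNeighborSet hG huv hx hy' (G.ne_of_adj hy) hy⟩

theorem nonempty_neighborSet_diff_edgeNeighborSet (hG : 6 ≤ G.egirth) (huv : G.Adj u v)
    {x : V} (hnt : (G.neighborSet x).Nontrivial) :
    (G.neighborSet x \ edgeNeighborSet G u v).Nonempty := by
  by_cases hxu : x = u
  · exact ⟨v, by simp [hxu, huv, mem_edgeNeighborSet]⟩
  by_cases hxv : x = v
  · exact ⟨u, by simp [hxv, huv.symm, mem_edgeNeighborSet]⟩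
  by_contra hempty
  have all_mem : G.neighborSet x ⊆ edgeNeighborSet G u v := by
    rwa [Set.not_nonempty_iff_eq_empty, Set.sdiff_eq_empty] at hempty
  have := subsingleton_neighborSet_inter_edgeNeighborSet hG huv hxu hxv
  rw [Set.inter_eq_left.mpr all_mem] at this
  exact Set.not_subsingleton_iff.mpr hnt this

end EdgeNeighborhood

section Domination

open SimpleGraph

variable {V : Type*} {G : SimpleGraph V}

theorem isTR2DF_indicator_one {D : Set V}
    (dominating : ∀ x ∉ D, (G.neighborSet x ∩ D).Nontrivial)
    (total : ∀ x ∈ D, (G.neighborSet x ∩ D).Nonempty) :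
    IsTR2DF G (D.indicator 1) := by
  refine ⟨fun x => ?_, fun x hx => Or.inr ?_, fun x hx => ?_⟩
  · by_cases hx : x ∈ D <;> simp [hx]
  · have hxD : x ∉ D := by simpa using hx
    obtain ⟨a, ⟨hxa, ha⟩, b, ⟨hxb, hb⟩, hab⟩ := dominating x hxD
    exact ⟨a, b, hab, G.adj_symm hxa, G.adj_symm hxb, by simp [ha], by simp [hb]⟩
  · have hxD : x ∈ D := Set.mem_of_indicator_ne_zero hx.ne'
    obtain ⟨a, hxa, ha⟩ := total x hxD
    exact ⟨a, G.adj_symm hxa, by simp [ha]⟩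

variable [Fintype V]

theorem tR2_le_sum {f : V → ℕ} (hf : IsTR2DF G f) : tR2 G ≤ ∑ x, f x :=
  Nat.sInf_le ⟨f, hf, rfl⟩

theorem tR2_le_ncard {D : Set V}
    (dominating : ∀ x ∉ D, (G.neighborSet x ∩ D).Nontrivial)
    (total : ∀ x ∈ D, (G.neighborSet x ∩ D).Nonempty) :
    tR2 G ≤ D.ncard := by
  classical
  calc
    tR2 G ≤ ∑ x, D.indicator 1 x := tR2_le_sum (isTR2DF_indicator_one dominating total)
    _ = D.ncard := by simp [Set.indicator_apply, Set.ncard_eq_toFinset_card', Set.toFinset]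

theorem nontrivial_neighborSet_of_two_le_minDegree [DecidableRel G.Adj]
    (hδ : 2 ≤ G.minDegree) (x : V) : (G.neighborSet x).Nontrivial := by
  rw [← coe_neighborFinset, ← Finset.Nontrivial, ← Finset.one_lt_card_iff_nontrivial,
    card_neighborFinset_eq_degree]
  exact hδ.trans (G.minDegree_le_degree x)

theorem tR2_add_degree_add_degree_le [DecidableRel G.Adj] (hG : 6 ≤ G.egirth)
    (hδ : 2 ≤ G.minDegree) {u v : V} (huv : G.Adj u v) :
    tR2 G + (G.degree u + G.degree v) ≤ Fintype.card V + 2 := by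
  let S := edgeNeighborSet G u v
  have hG' : 5 ≤ G.egirth := le_trans (by norm_num) hG
  have hnt := nontrivial_neighborSet_of_two_le_minDegree hδ
  have weight : tR2 G ≤ Sᶜ.ncard := by
    refine tR2_le_ncard (fun x hx => ?_) (fun x _ => ?_) <;> rw [← Set.sdiff_eq]
    · exact nontrivial_neighborSet_diff_edgeNeighborSet hG' huv (not_not.mp hx) (hnt x)
    · exact nonempty_neighborSet_diff_edgeNeighborSet hG huv (hnt x)
  calc
    tR2 G + (G.degree u + G.degree v) = tR2 G + (S.ncard + 2) := by
      rw [ncard_edgeNeighborSet_add_two (le_trans (by norm_num) hG) huv]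
    _ ≤ S.ncard + Sᶜ.ncard + 2 := by omega
    _ = Fintype.card V + 2 := by rw [Set.ncard_add_ncard_compl, Nat.card_eq_fintype_card]

end Domination

theorem stmt12_general {V : Type*} [Fintype V] (G : SimpleGraph V) [DecidableRel G.Adj]
    (hg : 6 ≤ G.egirth) (hδ : 2 ≤ G.minDegree)
    (heq : tR2 G + (G.maxDegree + G.minDegree) = Fintype.card V + 2) :
    ∀ u : V, G.degree u = G.maxDegree → ∀ v : V, G.Adj u v →
      G.degree v = G.minDegree := by
  intro u hu v huv
  have upper := tR2_add_degree_add_degree_le hg hδ huv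
  have lower := G.minDegree_le_degree v
  omega

theorem stmt12 {V : Type*} [Fintype V] (G : SimpleGraph V) [DecidableRel G.Adj]
    (hconn : G.Connected) (hnt : Nontrivial V)
    (hg : 6 ≤ G.girth) (hδ : 2 ≤ G.minDegree)
    (heq : tR2 G + (G.maxDegree + G.minDegree) = Fintype.card V + 2) :
    ∀ u : V, G.degree u = G.maxDegree → ∀ v : V, G.Adj u v →
      G.degree v = G.minDegree :=
  stmt12_general G ((Nat.cast_le.mpr hg).trans G.egirth.natCast_toNat_le_self) hδ heq
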